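/- Let ω = e^{2πi/3}. For all complex numbers a and b, the matrix-valued function k ↦ P(k)⁻¹ · A · P(k), where A is the 3×3 matrix with rows (a, 0, 0), (0, 0, 0), (0, b, -a), converges as k → 0 (k ≠ 0) to the matrix ℬ · 𝒱̃ · ℬ, where 𝒱̃ = (a/(ω(1-ω))) · N, N is the 3×3 matrix with rows (0, ω, 1+ω), (1+ω, 0, ω), (ω, 1+ω, 0), and ℬ is the permutation matrix with rows (0,1,0), (1,0,0), (0,0,1). (This says that the leading term of Ṽ₁ as k → 0 is off-diagonal and equals ℬ𝒱̃ℬ.) -/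

import Mathlib

open Complex

/-- The primitive cube root of unity `ω = e^{2πi/3}`. -/
noncomputable def ω : ℂ := Complex.exp (2 * Real.pi * Complex.I / 3)

/-- `l_j(k) = (1/√3)(ω^j k + 1/(ω^j k))`. -/
noncomputable def lfun (j : ℕ) (k : ℂ) : ℂ :=
  (1 / (Real.sqrt 3 : ℂ)) * (ω ^ j * k + 1 / (ω ^ j * k))

/-- `λ(k) = (1/(3√3))(k³ + 1/k³)`. -/
noncomputable def lamfun (k : ℂ) : ℂ :=
  (1 / (3 * (Real.sqrt 3 : ℂ))) * (k ^ 3 + 1 / k ^ 3)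

/-- `z_j(k) = √3 ((ω^j k)² + (ω^j k)⁻²)/(k³ + k⁻³)`. -/
noncomputable def zfun (j : ℕ) (k : ℂ) : ℂ :=
  (Real.sqrt 3 : ℂ) * ((ω ^ j * k) ^ 2 + ((ω ^ j * k) ^ 2)⁻¹) / (k ^ 3 + (k ^ 3)⁻¹)

/-- The matrix `P(k)` with rows `(1,1,1)`, `(l₁,l₂,l₃)`, `(l₁²,l₂²,l₃²)`. -/
noncomputable def Pmat (k : ℂ) : Matrix (Fin 3) (Fin 3) ℂ :=
  !![1, 1, 1;
     lfun 1 k, lfun 2 k, lfun 3 k;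
     (lfun 1 k) ^ 2, (lfun 2 k) ^ 2, (lfun 3 k) ^ 2]

/-- The cyclic permutation matrix `𝒜`. -/
def matA : Matrix (Fin 3) (Fin 3) ℂ := !![0, 0, 1; 1, 0, 0; 0, 1, 0]

/-- The transposition matrix `ℬ`. -/
def matB : Matrix (Fin 3) (Fin 3) ℂ := !![0, 1, 0; 1, 0, 0; 0, 0, 1]

/-! Each `l_j` has a simple pole at `k = 0`: `l_j(k) = (√3 k)⁻¹ m_j(k)` with `m_j` regular and
`m_j(0) = ω⁻ʲ`. As `P(k)` is the transposed Vandermonde matrix of the `l_j(k)`, it factors as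
`D(k) V(k)` with `D(k) = diag((√3 k)⁻ⁱ)` and `V(k)` the transposed Vandermonde matrix of the
`m_j(k)`, which is invertible at `k = 0`. Conjugation by `D(k)` multiplies the `(i, j)` entry by
`(√3 k)^(i - j)`, so a lower triangular matrix tends to its diagonal part. Its conjugate by the
discrete Fourier matrix `V(0)` is the limit, and the rows of `V(0)` are left eigenvectors of the
circulant matrix `ℬNℬ`, with eigenvalues `ω(1 - ω)`, `0`, `-ω(1 - ω)`. -/

open Filter Topology Matrix

section FinThree

variable {R : Type*}

lemma isLowerTriangular_fin_three [Zero R] (a b c d e f : R) :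
    (!![a, 0, 0; b, c, 0; d, e, f] : Matrix (Fin 3) (Fin 3) R).IsLowerTriangular := by
  intro i j hij
  replace hij : i < j := hij
  fin_cases i <;> fin_cases j <;> first | rfl | simp at hij

lemma diag_fin_three (a b c d e f g h i : R) :
    diag !![a, b, c; d, e, f; g, h, i] = ![a, e, i] := by
  ext j
  fin_cases j <;> rfl

end FinThree

section Vandermonde

lemma transpose_vandermonde_smul {R : Type*} [CommRing R] {n : ℕ} (c : R) (v : Fin n → R) :
    (vandermonde (c • v))ᵀ = diagonal (fun i : Fin n => c ^ (i : ℕ)) * (vandermonde v)ᵀ := by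
  ext i j
  simp [mul_pow]

lemma continuous_vandermonde {R : Type*} [CommRing R] [TopologicalSpace R] [ContinuousMul R]
    {n : ℕ} : Continuous (vandermonde : (Fin n → R) → Matrix (Fin n) (Fin n) R) :=
  continuous_matrix fun i j => (continuous_apply i).pow (j : ℕ)

lemma inv_diagonal_inv_pow {K : Type*} [Field K] {n : ℕ} {c : K} (hc : c ≠ 0) :
    (diagonal fun i : Fin n => c⁻¹ ^ (i : ℕ))⁻¹ = diagonal fun i : Fin n => c ^ (i : ℕ) := by
  refine inv_eq_left_inv ?_
  simp [diagonal_mul_diagonal, hc]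

variable {K : Type*} [Field K] [TopologicalSpace K] {n : ℕ}

lemma tendsto_diagonal_pow_conj [ContinuousMul K] {A : Matrix (Fin n) (Fin n) K}
    (hA : A.IsLowerTriangular) :
    Tendsto (fun c : K => diagonal (fun i : Fin n => c ^ (i : ℕ)) * A *
      diagonal (fun i : Fin n => c⁻¹ ^ (i : ℕ))) (𝓝[≠] 0) (𝓝 (diagonal A.diag)) := by
  refine tendsto_pi_nhds.2 fun i => tendsto_pi_nhds.2 fun j => ?_
  simp only [mul_diagonal, diagonal_mul]
  rcases lt_trichotomy i j with hij | rfl | hji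
  · have hAij : A i j = 0 := hA hij
    simpa [hAij, hij.ne] using tendsto_const_nhds
  · refine tendsto_const_nhds.congr' ?_
    filter_upwards [self_mem_nhdsWithin] with c (hc : c ≠ 0)
    rw [diagonal_apply_eq, diag_apply, inv_pow, mul_right_comm, mul_inv_cancel₀ (pow_ne_zero _ hc),
      one_mul]
  · have hpow : Tendsto (fun c : K => c ^ (i - j : ℕ) * A i j) (𝓝[≠] 0) (𝓝 0) := by
      have hcont : Continuous fun c : K => c ^ (i - j : ℕ) * A i j := by fun_prop
      simpa [(Nat.sub_pos_of_lt hji).ne'] using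
        (hcont.tendsto 0).mono_left (nhdsWithin_le_nhds (s := {0}ᶜ))
    rw [diagonal_apply_ne _ hji.ne']
    refine hpow.congr' ?_
    filter_upwards [self_mem_nhdsWithin] with c (hc : c ≠ 0)
    rw [pow_sub₀ c hc hji.le, inv_pow]
    ring

variable [IsTopologicalDivisionRing K] {α : Type*} {l : Filter α}

lemma tendsto_matrix_inv_mul_mul {m : Type*} [Fintype m] [DecidableEq m]
    {B V : α → Matrix m m K} {B₀ V₀ : Matrix m m K}
    (hB : Tendsto B l (𝓝 B₀)) (hV : Tendsto V l (𝓝 V₀)) (hV₀ : V₀.det ≠ 0) :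
    Tendsto (fun x => (V x)⁻¹ * B x * V x) l (𝓝 (V₀⁻¹ * B₀ * V₀)) := by
  have hdet : ContinuousAt Ring.inverse V₀.det := by
    simpa only [Ring.inverse_eq_inv'] using continuousAt_inv₀ hV₀
  exact (((continuousAt_matrix_inv V₀ hdet).tendsto.comp hV).mul hB).mul hV

theorem tendsto_transpose_vandermonde_conj {A : Matrix (Fin n) (Fin n) K}
    (hA : A.IsLowerTriangular) {c : α → K} (hc : Tendsto c l (𝓝[≠] 0))
    {v : α → Fin n → K} {v₀ : Fin n → K} (hv : Tendsto v l (𝓝 v₀)) (hv₀ : v₀.Injective) :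
    Tendsto (fun x => (vandermonde ((c x)⁻¹ • v x))ᵀ⁻¹ * A * (vandermonde ((c x)⁻¹ • v x))ᵀ) l
      (𝓝 ((vandermonde v₀)ᵀ⁻¹ * diagonal A.diag * (vandermonde v₀)ᵀ)) := by
  have hV : Tendsto (fun x => (vandermonde (v x))ᵀ) l (𝓝 (vandermonde v₀)ᵀ) :=
    (continuous_vandermonde.matrix_transpose.tendsto v₀).comp hv
  have hdet : (vandermonde v₀)ᵀ.det ≠ 0 := by
    rwa [det_transpose, det_vandermonde_ne_zero_iff]
  refine (tendsto_matrix_inv_mul_mul ((tendsto_diagonal_pow_conj hA).comp hc) hV hdet).congr' ?_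
  filter_upwards [hc self_mem_nhdsWithin] with x (hx : c x ≠ 0)
  rw [transpose_vandermonde_smul, Matrix.mul_inv_rev, inv_diagonal_inv_pow hx]
  simp only [Function.comp_apply, Matrix.mul_assoc]

end Vandermonde

lemma isPrimitiveRoot_ω : IsPrimitiveRoot ω 3 :=
  Complex.isPrimitiveRoot_exp 3 three_ne_zero

lemma one_add_ω_add_sq : 1 + ω + ω ^ 2 = 0 := by
  simpa [Finset.sum_range_succ] using isPrimitiveRoot_ω.geom_sum_eq_zero (by norm_num)

/-- The regular parts `m_j(k) = ω^j k² + ω^{-j}` of `l_j(k) = (√3 k)⁻¹ m_j(k)`. The entry at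
`j : Fin 3` is `m_{j+1}(k)`. -/
noncomputable def rescaledNode (k : ℂ) (j : Fin 3) : ℂ :=
  ω ^ (j + 1 : ℕ) * k ^ 2 + (ω ^ (j + 1 : ℕ))⁻¹

lemma continuous_rescaledNode : Continuous rescaledNode := by
  unfold rescaledNode
  fun_prop

lemma rescaledNode_zero_injective : (rescaledNode 0).Injective := by
  intro i j hij
  have hpow : ω ^ (i : ℕ) = ω ^ (j : ℕ) := by
    simpa [rescaledNode, pow_succ, isPrimitiveRoot_ω.ne_zero three_ne_zero] using hij
  exact Fin.ext (isPrimitiveRoot_ω.pow_inj i.isLt j.isLt hpow)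

lemma lfun_eq_inv_mul_rescaledNode {k : ℂ} (hk : k ≠ 0) (j : Fin 3) :
    lfun (j + 1) k = (√3 * k : ℂ)⁻¹ * rescaledNode k j := by
  have hω : ω ≠ 0 := isPrimitiveRoot_ω.ne_zero three_ne_zero
  unfold lfun rescaledNode
  field_simp

lemma Pmat_eq_transpose_vandermonde {k : ℂ} (hk : k ≠ 0) :
    Pmat k = (vandermonde ((√3 * k : ℂ)⁻¹ • rescaledNode k))ᵀ := by
  ext i j
  simp only [transpose_apply, vandermonde_apply, Pi.smul_apply, smul_eq_mul,
    ← lfun_eq_inv_mul_rescaledNode hk]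
  fin_cases i <;> fin_cases j <;> simp [Pmat]

theorem Vtilde1_leading_term_at_zero_general {A : Matrix (Fin 3) (Fin 3) ℂ}
    (hA : A.IsLowerTriangular) :
    Tendsto (fun k : ℂ => (Pmat k)⁻¹ * A * Pmat k) (𝓝[≠] 0)
      (𝓝 ((vandermonde (rescaledNode 0))ᵀ⁻¹ * diagonal A.diag *
        (vandermonde (rescaledNode 0))ᵀ)) := by
  have hsqrt : (√3 : ℂ) ≠ 0 := by simp
  have hscale : Tendsto (fun k : ℂ => √3 * k) (𝓝[≠] 0) (𝓝[≠] 0) := by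
    refine tendsto_nhdsWithin_iff.2 ⟨?_, ?_⟩
    · exact ((continuous_const_mul (√3 : ℂ)).tendsto' 0 0 (mul_zero _)).mono_left
        nhdsWithin_le_nhds
    · filter_upwards [self_mem_nhdsWithin] with k hk using mul_ne_zero hsqrt hk
  have hnode : Tendsto rescaledNode (𝓝[≠] 0) (𝓝 (rescaledNode 0)) :=
    continuous_rescaledNode.continuousAt.mono_left nhdsWithin_le_nhds
  refine (tendsto_transpose_vandermonde_conj hA hscale hnode rescaledNode_zero_injective).congr' ?_
  filter_upwards [self_mem_nhdsWithin] with k hk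
  rw [Pmat_eq_transpose_vandermonde hk]

/-- The circulant matrix `N`, for which `𝒱̃ = (a/(ω(1-ω))) N`. -/
noncomputable def matN : Matrix (Fin 3) (Fin 3) ℂ :=
  !![0, ω, 1 + ω;
     1 + ω, 0, ω;
     ω, 1 + ω, 0]

lemma matB_mul_matN_mul_matB : matB * matN * matB = matNᵀ := by
  ext i j
  fin_cases i <;> fin_cases j <;> simp [matB, matN, Matrix.mul_apply, Fin.sum_univ_three]

lemma transpose_vandermonde_rescaledNode_zero :
    (vandermonde (rescaledNode 0))ᵀ = !![1, 1, 1; ω ^ 2, ω, 1; ω, ω ^ 2, 1] := by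
  have hcube : ω ^ 3 = 1 := isPrimitiveRoot_ω.pow_eq_one
  have hinv : ω⁻¹ = ω ^ 2 := inv_eq_of_mul_eq_one_right (by rw [← hcube]; ring)
  ext i j
  fin_cases i <;> fin_cases j <;> simp [rescaledNode, hinv] <;> grind

lemma transpose_vandermonde_mul_matN_transpose :
    (vandermonde (rescaledNode 0))ᵀ * matNᵀ =
      diagonal ![ω * (1 - ω), 0, -(ω * (1 - ω))] * (vandermonde (rescaledNode 0))ᵀ := by
  have hsum := one_add_ω_add_sq
  rw [transpose_vandermonde_rescaledNode_zero]
  ext i j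
  fin_cases i <;> fin_cases j <;>
    simp [matN, Matrix.mul_apply, Fin.sum_univ_three, diagonal_apply] <;> grind

lemma transpose_vandermonde_conj_diagonal (a : ℂ) :
    (vandermonde (rescaledNode 0))ᵀ⁻¹ * diagonal ![a, 0, -a] * (vandermonde (rescaledNode 0))ᵀ =
      matB * ((a / (ω * (1 - ω))) • matN) * matB := by
  have hdet : IsUnit (vandermonde (rescaledNode 0))ᵀ.det := by
    rw [det_transpose]
    exact (det_vandermonde_ne_zero_iff.2 rescaledNode_zero_injective).isUnit
  have hδ : ω * (1 - ω) ≠ 0 :=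
    mul_ne_zero (isPrimitiveRoot_ω.ne_zero three_ne_zero)
      (sub_ne_zero.2 (isPrimitiveRoot_ω.ne_one (by norm_num)).symm)
  have hdiag : (diagonal ![a, 0, -a] : Matrix (Fin 3) (Fin 3) ℂ) =
      (a / (ω * (1 - ω))) • diagonal ![ω * (1 - ω), 0, -(ω * (1 - ω))] := by
    rw [← diagonal_smul]
    congr 1
    simp [div_mul_cancel₀ a hδ]
  rw [hdiag, Matrix.mul_smul, Matrix.smul_mul, Matrix.mul_smul, Matrix.smul_mul,
    matB_mul_matN_mul_matB, Matrix.mul_assoc, ← transpose_vandermonde_mul_matN_transpose,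
    nonsing_inv_mul_cancel_left _ _ hdet]

open Filter Topology in
/-- As `k → 0`, `P(k)⁻¹ A P(k) → ℬ 𝒱̃ ℬ`, where `A` has rows `(a,0,0)`, `(0,0,0)`,
`(0,b,-a)` and `𝒱̃ = (a/(ω(1-ω))) N` with `N` having rows `(0,ω,1+ω)`, `(1+ω,0,ω)`,
`(ω,1+ω,0)`. -/
theorem Vtilde1_leading_term_at_zero (a b : ℂ) :
    Tendsto
      (fun k : ℂ => (Pmat k)⁻¹ *
        (!![a, 0, 0;
            0, 0, 0;
            0, b, -a] : Matrix (Fin 3) (Fin 3) ℂ) * Pmat k)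
      (𝓝[≠] (0 : ℂ))
      (𝓝 (matB *
        ((a / (ω * (1 - ω))) •
          !![0, ω, 1 + ω;
             1 + ω, 0, ω;
             ω, 1 + ω, 0]) * matB)) := by
  rw [← matN, ← transpose_vandermonde_conj_diagonal]
  simpa only [diag_fin_three] using
    Vtilde1_leading_term_at_zero_general (isLowerTriangular_fin_three a 0 0 0 b (-a))
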